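/- Let T > 0, let γ > 1 be a real number, and let a ∈ L¹([0,T]) satisfy (a1). Then the equation u'' + a(x) u^γ = 0 has a positive solution satisfying the Neumann boundary conditions if and only if ∫₀ᵀ a(x) dx < 0, and it has a positive solution satisfying the periodic boundary conditions if and only if ∫₀ᵀ a(x) dx < 0. -/

import Mathlib

open MeasureTheory Set Filter

/-- `u` (with derivative `u'`) is a C¹ solution of `u'' + f(x) = 0` on `[0,T]`:
`u'` is absolutely continuous and the equation holds a.e., expressed via the
integral equation `u'(x) = u'(0) − ∫₀ˣ f(t) dt`. -/
def IsSolOn (T : ℝ) (f : ℝ → ℝ) (u u' : ℝ → ℝ) : Prop :=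
  (∀ x ∈ Icc (0:ℝ) T, HasDerivWithinAt u (u' x) (Icc (0:ℝ) T) x) ∧
  ContinuousOn u' (Icc (0:ℝ) T) ∧
  ∀ x ∈ Icc (0:ℝ) T, u' x = u' 0 - ∫ t in (0:ℝ)..x, f t

/-- The equation `u'' + a(x) g(u) = 0` on `[0,T]` has a positive solution
satisfying the Neumann boundary conditions. -/
def PosSolNeumann (T : ℝ) (a g : ℝ → ℝ) : Prop :=
  ∃ u u' : ℝ → ℝ, IsSolOn T (fun t => a t * g (u t)) u u' ∧
    (∀ x ∈ Icc (0:ℝ) T, 0 < u x) ∧ u' 0 = 0 ∧ u' T = 0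

/-- The equation `u'' + a(x) g(u) = 0` on `[0,T]` has a positive solution
satisfying the periodic boundary conditions. -/
def PosSolPeriodic (T : ℝ) (a g : ℝ → ℝ) : Prop :=
  ∃ u u' : ℝ → ℝ, IsSolOn T (fun t => a t * g (u t)) u u' ∧
    (∀ x ∈ Icc (0:ℝ) T, 0 < u x) ∧ u 0 = u T ∧ u' 0 = u' T

/-- Condition (a1): there are `m ≥ 1` pairwise disjoint closed intervals in `[0,T]`
on which `a ≥ 0` a.e. and `a` is not a.e. zero, while `a ≤ 0` a.e. outside them. -/
def CondA1 (T : ℝ) (a : ℝ → ℝ) : Prop :=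
  ∃ (m : ℕ) (σ τ : Fin m → ℝ), 0 < m ∧
    (∀ i, 0 ≤ σ i ∧ σ i ≤ τ i ∧ τ i ≤ T) ∧
    (Pairwise fun i j => Disjoint (Icc (σ i) (τ i)) (Icc (σ j) (τ j))) ∧
    (∀ i, ∀ᵐ x ∂(volume.restrict (Icc (σ i) (τ i))), 0 ≤ a x) ∧
    (∀ i, ¬ (∀ᵐ x ∂(volume.restrict (Icc (σ i) (τ i))), a x = 0)) ∧
    (∀ᵐ x ∂(volume.restrict (Icc (0:ℝ) T \ ⋃ i, Icc (σ i) (τ i))), a x ≤ 0)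

/-!
Among the functions `u = c + ∫₀ˣ f` with `‖f‖₂ ≤ 1`, maximise `∫ a u₊^(γ + 1)`, where for the
periodic problem `f` is also required to have mean zero. When `|c|` is large and `‖f‖₂ ≤ 1` the
functional is nonpositive because `∫ a < 0`, so `c` may be confined to a bounded interval; since
`f ↦ ∫₀ˣ f` is weakly continuous, a maximiser exists, and its energy is positive because `a` is
not a.e. nonpositive. Its Euler–Lagrange equation is `u'' + l a u₊^γ = 0` with `l > 0`, together
with the boundary conditions, and as `γ ≠ 1` a rescaling of `u` removes `l`. Such a `u` is
positive: if its minimum `m` were nonpositive, then `u - m` and its derivative would vanish at a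
point, while `u₊^γ ≤ C (u - m)`, so Cauchy uniqueness would make `u` the constant
`m ≤ 0`, whose energy vanishes.

Conversely, testing the equation with `u^(-γ)` gives `∫ a = -γ ∫ u'² u^(-γ - 1)`, which is
negative unless `u` is constant, i.e. unless `a` vanishes a.e.
-/

section PosPart

variable {p r s : ℝ}

lemma posPart_mul_of_nonneg (hr : 0 ≤ r) : (r * s)⁺ = r * s⁺ := by
  simpa only [posPart_def, mul_zero] using (mul_max_of_nonneg s 0 hr).symm

lemma continuous_posPart_rpow (hp : 0 ≤ p) : Continuous fun s : ℝ => s⁺ ^ p :=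
  continuous_posPart.rpow_const fun _ => Or.inr hp

lemma norm_posPart_rpow_le {B : ℝ} (hp : 0 ≤ p) (hs : |s| ≤ B) : ‖s⁺ ^ p‖ ≤ B ^ p := by
  rw [Real.norm_of_nonneg (Real.rpow_nonneg (posPart_nonneg s) p)]
  exact Real.rpow_le_rpow (posPart_nonneg s)
    ((sup_le (le_abs_self s) (abs_nonneg s)).trans hs) hp

lemma hasDerivAt_posPart_rpow (hp : 1 < p) (s : ℝ) :
    HasDerivAt (fun s : ℝ => s⁺ ^ p) (p * s⁺ ^ (p - 1)) s := by
  have hp' : 0 < p - 1 := sub_pos.2 hp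
  refine hasDerivAt_of_hasDerivAt_of_ne' (x := 0) (g := fun s : ℝ => p * s⁺ ^ (p - 1))
    (fun y hy => ?_) (continuous_posPart_rpow (by linarith)).continuousAt
    ((continuous_posPart_rpow hp'.le).const_mul p).continuousAt s
  rcases hy.lt_or_gt with hy | hy
  · rw [posPart_eq_zero.2 hy.le, Real.zero_rpow hp'.ne', mul_zero]
    refine (hasDerivAt_const y (0 : ℝ)).congr_of_eventuallyEq ?_
    filter_upwards [Iio_mem_nhds hy] with x hx
    rw [posPart_eq_zero.2 (le_of_lt hx), Real.zero_rpow (by linarith)]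
  · rw [posPart_eq_self.2 hy.le]
    refine (Real.hasDerivAt_rpow_const (Or.inl hy.ne')).congr_of_eventuallyEq ?_
    filter_upwards [Ioi_mem_nhds hy] with x hx
    rw [posPart_eq_self.2 (le_of_lt hx)]

lemma posPart_rpow_le_mul_sub {m B : ℝ} (hp : 1 ≤ p) (hm : m ≤ 0) (hms : m ≤ s) (hs : |s| ≤ B) :
    s⁺ ^ p ≤ B ^ (p - 1) * (s - m) := by
  have hsplit : s⁺ ^ p = s⁺ ^ (p - 1) * s⁺ := by
    rw [← Real.rpow_add_one' (posPart_nonneg s) (by linarith), sub_add_cancel]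
  have hpow : s⁺ ^ (p - 1) ≤ B ^ (p - 1) :=
    (le_abs_self _).trans (norm_posPart_rpow_le (sub_nonneg.2 hp) hs)
  have hsub : s⁺ ≤ s - m := sup_le (by linarith) (by linarith)
  rw [hsplit]
  exact mul_le_mul hpow hsub (posPart_nonneg s) ((Real.rpow_nonneg (posPart_nonneg s) _).trans hpow)

end PosPart

lemma exists_subseq_weak_tendsto {H : Type*} [NormedAddCommGroup H] [InnerProductSpace ℝ H]
    [CompleteSpace H] [TopologicalSpace.SeparableSpace H] {R : ℝ} (f : ℕ → H)
    (hf : ∀ n, ‖f n‖ ≤ R) :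
    ∃ g : H, ‖g‖ ≤ R ∧ ∃ φ : ℕ → ℕ, StrictMono φ ∧
      ∀ y : H, Tendsto (fun n => inner ℝ y (f (φ n))) atTop (nhds (inner ℝ y g)) := by
  obtain ⟨L, hL, φ, hφ, hlim⟩ := WeakDual.isSeqCompact_closedBall ℝ H 0 R
    (x := fun n => StrongDual.toWeakDual (InnerProductSpace.toDual ℝ H (f n)))
    (fun n => by simpa using hf n)
  refine ⟨(InnerProductSpace.toDual ℝ H).symm (WeakDual.toStrongDual L), by simpa using hL, φ, hφ,
    fun y => ?_⟩
  rw [real_inner_comm, InnerProductSpace.toDual_symm_apply]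
  refine (((WeakDual.eval_continuous (𝕜 := ℝ) y).tendsto L).comp hlim).congr fun n => ?_
  exact real_inner_comm y (f (φ n))

section Energy

open scoped RealInnerProductSpace

variable {X H : Type*} [NormedAddCommGroup H] [InnerProductSpace ℝ H] {k : X → H}

/-- The function `x ↦ c + ⟪k x, f⟫` represented by `(c, f)`. When `k x` is the indicator of
`(0, x]` in `L²(0, T)`, this is the element of `H¹(0, T)` with value `c` at `0` and
derivative `f`. -/
def kernelFun (k : X → H) (z : ℝ × H) (x : X) : ℝ := z.1 + ⟪k x, z.2⟫

lemma kernelFun_smul (r : ℝ) (z : ℝ × H) (x : X) :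
    kernelFun k (r • z) x = r * kernelFun k z x := by
  simp only [kernelFun, Prod.smul_fst, Prod.smul_snd, inner_smul_right, smul_eq_mul]
  ring

lemma kernelFun_add (z w : ℝ × H) (x : X) :
    kernelFun k (z + w) x = kernelFun k z x + kernelFun k w x := by
  simp only [kernelFun, Prod.fst_add, Prod.snd_add, inner_add_right]
  ring

variable [MeasurableSpace X] {μ : Measure X} {a : X → ℝ} {M p : ℝ}

/-- A bounded, weakly measurable family of vectors `k x`, `x ∈ X`, of a Hilbert space `H`: it
represents the bounded operator `f ↦ ⟪k ·, f⟫` from `H` into the bounded measurable functions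
on `X`. -/
structure IsBddKernel (μ : Measure X) (k : X → H) (M : ℝ) : Prop where
  aestronglyMeasurable_inner (f : H) : AEStronglyMeasurable (fun x => ⟪k x, f⟫) μ
  norm_le (x : X) : ‖k x‖ ≤ M

/-- The functional `∫ a u₊ᵖ` of the function `u` represented by `z`. -/
noncomputable def energy (μ : Measure X) (a : X → ℝ) (k : X → H) (p : ℝ) (z : ℝ × H) : ℝ :=
  ∫ x, a x * (kernelFun k z x)⁺ ^ p ∂μ

namespace IsBddKernel

lemma aestronglyMeasurable_kernelFun (hk : IsBddKernel μ k M) (z : ℝ × H) :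
    AEStronglyMeasurable (kernelFun k z) μ :=
  aestronglyMeasurable_const.add (hk.aestronglyMeasurable_inner z.2)

lemma abs_inner_le (hk : IsBddKernel μ k M) (x : X) (f : H) : |⟪k x, f⟫| ≤ M * ‖f‖ :=
  (abs_real_inner_le_norm _ _).trans (mul_le_mul_of_nonneg_right (hk.norm_le x) (norm_nonneg f))

lemma abs_kernelFun_le (hk : IsBddKernel μ k M) {z : ℝ × H} {R : ℝ} (hz : ‖z‖ ≤ R) (x : X) :
    |kernelFun k z x| ≤ (1 + M) * R := by
  have hM : 0 ≤ M := (norm_nonneg (k x)).trans (hk.norm_le x)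
  calc |kernelFun k z x| ≤ |z.1| + |⟪k x, z.2⟫| := abs_add_le _ _
    _ ≤ R + M * R := add_le_add ((norm_fst_le z).trans hz)
        ((hk.abs_inner_le x z.2).trans
          (mul_le_mul_of_nonneg_left ((norm_snd_le z).trans hz) hM))
    _ = (1 + M) * R := by ring

lemma aestronglyMeasurable_posPart_rpow (hk : IsBddKernel μ k M) (hp : 0 ≤ p) (z : ℝ × H) :
    AEStronglyMeasurable (fun x => (kernelFun k z x)⁺ ^ p) μ :=
  (continuous_posPart_rpow hp).comp_aestronglyMeasurable (hk.aestronglyMeasurable_kernelFun z)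

lemma integrable_mul_posPart_rpow (hk : IsBddKernel μ k M) (ha : Integrable a μ) (hp : 0 ≤ p)
    (z : ℝ × H) : Integrable (fun x => a x * (kernelFun k z x)⁺ ^ p) μ :=
  ha.mul_bdd (hk.aestronglyMeasurable_posPart_rpow hp z)
    (ae_of_all _ fun x => norm_posPart_rpow_le hp (hk.abs_kernelFun_le le_rfl x))

lemma tendsto_energy (hk : IsBddKernel μ k M) (ha : Integrable a μ) (hp : 0 ≤ p) {ι : Type*}
    {l : Filter ι} [l.IsCountablyGenerated] {z : ι → ℝ × H} {z₀ : ℝ × H} {R : ℝ}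
    (hR : ∀ᶠ n in l, ‖z n‖ ≤ R)
    (hlim : ∀ x, Tendsto (fun n => kernelFun k (z n) x) l (nhds (kernelFun k z₀ x))) :
    Tendsto (fun n => energy μ a k p (z n)) l (nhds (energy μ a k p z₀)) := by
  refine tendsto_integral_filter_of_dominated_convergence
    (fun x => ‖a x‖ * ((1 + M) * R) ^ p)
    (Eventually.of_forall fun n => (hk.integrable_mul_posPart_rpow ha hp _).aestronglyMeasurable)
    ?_ (ha.norm.mul_const _)
    (ae_of_all _ fun x => (((continuous_posPart_rpow hp).tendsto _).comp (hlim x)).const_mul _)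
  filter_upwards [hR] with n hn
  refine ae_of_all _ fun x => ?_
  rw [norm_mul]
  exact mul_le_mul_of_nonneg_left (norm_posPart_rpow_le hp (hk.abs_kernelFun_le hn x))
    (norm_nonneg _)

lemma continuous_energy (hk : IsBddKernel μ k M) (ha : Integrable a μ) (hp : 0 ≤ p) :
    Continuous (energy μ a k p) :=
  continuous_iff_continuousAt.2 fun z₀ =>
    hk.tendsto_energy ha hp (R := ‖z₀‖ + 1)
      ((continuous_norm.tendsto z₀).eventually (eventually_le_nhds (lt_add_one _)))
      fun _ => ((continuous_fst.add (continuous_const.inner continuous_snd)).tendsto z₀ :)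

end IsBddKernel

lemma energy_smul {r : ℝ} (hr : 0 ≤ r) (z : ℝ × H) :
    energy μ a k p (r • z) = r ^ p * energy μ a k p z := by
  rw [energy, energy, ← integral_const_mul]
  refine integral_congr_ae (ae_of_all _ fun x => ?_)
  simp only [kernelFun_smul, posPart_mul_of_nonneg hr, Real.mul_rpow hr (posPart_nonneg _)]
  ring

lemma energy_const (c : ℝ) : energy μ a k p (c, 0) = (∫ x, a x ∂μ) * c⁺ ^ p := by
  simp only [energy, kernelFun, inner_zero_right, add_zero, integral_mul_const]

lemma energy_eq_zero_of_nonpos (hp : 0 < p) {z : ℝ × H} (hz : ∀ᵐ x ∂μ, kernelFun k z x ≤ 0) :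
    energy μ a k p z = 0 := by
  refine integral_eq_zero_of_ae ?_
  filter_upwards [hz] with x hx
  simp only [posPart_eq_zero.2 hx, Real.zero_rpow hp.ne', mul_zero, Pi.zero_apply]

namespace IsBddKernel

-- For `c → +∞` the rescaled energy of `(1, f / c)` tends to `∫ a < 0`; for `c → -∞` the
-- represented function is eventually negative and the energy vanishes.
lemma exists_forall_energy_nonpos (hk : IsBddKernel μ k M) (ha : Integrable a μ) (hp : 0 < p)
    (hneg : ∫ x, a x ∂μ < 0) :
    ∃ C, ∀ z : ℝ × H, C ≤ |z.1| → ‖z.2‖ ≤ 1 → energy μ a k p z ≤ 0 := by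
  have h10 : energy μ a k p (1, 0) < 0 := by
    simpa only [energy_const, posPart_eq_self.2 zero_le_one, Real.one_rpow, mul_one] using hneg
  obtain ⟨δ, hδ, hball⟩ := Metric.eventually_nhds_iff.1
    (((hk.continuous_energy ha hp.le).tendsto (1, 0)).eventually_lt_const h10)
  refine ⟨max M δ⁻¹ + 1, fun z hz hz2 => ?_⟩
  have hzM : M < |z.1| := by linarith [le_max_left M δ⁻¹]
  have hzδ : δ⁻¹ < |z.1| := by linarith [le_max_right M δ⁻¹]
  rcases le_total z.1 0 with h0 | h0
  · rw [abs_of_nonpos h0] at hzM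
    refine (energy_eq_zero_of_nonpos hp (ae_of_all _ fun x => ?_)).le
    have hM : 0 ≤ M := (norm_nonneg _).trans (hk.norm_le x)
    have hinner := (le_abs_self _).trans ((hk.abs_inner_le x z.2).trans
      (mul_le_of_le_one_right hM hz2))
    rw [kernelFun]
    linarith
  · rw [abs_of_nonneg h0] at hzδ
    have hpos : 0 < z.1 := (inv_pos.2 hδ).trans hzδ
    have hdist : dist ((1, z.1⁻¹ • z.2) : ℝ × H) (1, 0) < δ := by
      rw [Prod.dist_eq, dist_self, dist_zero_right, max_eq_right (norm_nonneg _), norm_smul,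
        norm_inv, Real.norm_of_nonneg h0]
      exact (mul_le_of_le_one_right (inv_nonneg.2 h0) hz2).trans_lt (inv_lt_of_inv_lt₀ hδ hzδ)
    have hz_eq : z = z.1 • (1, z.1⁻¹ • z.2) := by
      ext <;> simp [smul_smul, hpos.ne']
    rw [hz_eq, energy_smul h0]
    exact mul_nonpos_of_nonneg_of_nonpos (Real.rpow_nonneg h0 p) (hball hdist).le

lemma isCompact_image_energy [CompleteSpace H] [TopologicalSpace.SeparableSpace H]
    (hk : IsBddKernel μ k M) (ha : Integrable a μ) (hp : 0 ≤ p) (C R : ℝ) :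
    IsCompact (energy μ a k p '' (Metric.closedBall 0 C ×ˢ Metric.closedBall 0 R)) := by
  refine IsSeqCompact.isCompact fun y hy => ?_
  choose z hz hzy using hy
  have hz1 (n : ℕ) : (z n).1 ∈ Metric.closedBall (0 : ℝ) C := (hz n).1
  have hz2 (n : ℕ) : ‖(z n).2‖ ≤ R := mem_closedBall_zero_iff.1 (hz n).2
  obtain ⟨g, hg, φ, hφ, hlimφ⟩ := exists_subseq_weak_tendsto (fun n => (z n).2) hz2
  obtain ⟨c, hc, ψ, hψ, hlimψ⟩ :=
    (isCompact_closedBall (0 : ℝ) C).tendsto_subseq (x := fun n => (z (φ n)).1) fun n => hz1 _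
  refine ⟨energy μ a k p (c, g), mem_image_of_mem _ ⟨hc, mem_closedBall_zero_iff.2 hg⟩,
    φ ∘ ψ, hφ.comp hψ, ?_⟩
  have hbdd : ∀ n, ‖z n‖ ≤ max C R := fun n =>
    max_le_max (mem_closedBall_zero_iff.1 (hz1 n)) (hz2 n)
  exact (hk.tendsto_energy ha hp (z := fun n => z (φ (ψ n))) (z₀ := (c, g))
    (Eventually.of_forall fun n => hbdd _) fun x =>
    hlimψ.add ((hlimφ (k x)).comp hψ.tendsto_atTop)).congr fun n => hzy _

lemma exists_energy_maximizer [CompleteSpace H] [TopologicalSpace.SeparableSpace H]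
    (hk : IsBddKernel μ k M) (ha : Integrable a μ) (hp : 0 < p) (hneg : ∫ x, a x ∂μ < 0)
    (hpos : ∃ z, 0 < energy μ a k p z) :
    ∃ z, ‖z.2‖ = 1 ∧ 0 < energy μ a k p z ∧
      ∀ w, energy μ a k p w ≤ energy μ a k p z * ‖w.2‖ ^ p := by
  obtain ⟨C, hC⟩ := hk.exists_forall_energy_nonpos ha hp hneg
  have hzero : (0 : ℝ × H) ∈ Metric.closedBall (0 : ℝ) |C| ×ˢ Metric.closedBall (0 : H) 1 := by
    simp
  obtain ⟨_, ⟨z, hz, rfl⟩, hmax⟩ :=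
    (hk.isCompact_image_energy ha hp.le |C| 1).exists_isGreatest ⟨_, mem_image_of_mem _ hzero⟩
  have hz0 : 0 ≤ energy μ a k p z :=
    (energy_eq_zero_of_nonpos hp (by simp [kernelFun])).ge.trans (hmax (mem_image_of_mem _ hzero))
  have hball : ∀ w : ℝ × H, ‖w.2‖ ≤ 1 → energy μ a k p w ≤ energy μ a k p z := by
    intro w hw
    rcases le_total C |w.1| with h | h
    · exact (hC w h hw).trans hz0
    · exact hmax (mem_image_of_mem _ ⟨mem_closedBall_zero_iff.2 (h.trans (le_abs_self C)),
        mem_closedBall_zero_iff.2 hw⟩)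
  have hhom : ∀ w, energy μ a k p w ≤ energy μ a k p z * ‖w.2‖ ^ p := by
    intro w
    rcases (norm_nonneg w.2).eq_or_lt with h | h
    · have hw : w = (w.1, 0) := Prod.ext rfl (norm_eq_zero.1 h.symm)
      rw [← h, Real.zero_rpow hp.ne', mul_zero, hw, energy_const]
      exact mul_nonpos_of_nonpos_of_nonneg hneg.le (Real.rpow_nonneg (posPart_nonneg _) p)
    · have hscale := hball (‖w.2‖⁻¹ • w) (by simp [norm_smul, h.ne'])
      rwa [energy_smul (inv_nonneg.2 h.le), Real.inv_rpow h.le,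
        inv_mul_le_iff₀ (Real.rpow_pos_of_pos h p), mul_comm] at hscale
  obtain ⟨w, hw⟩ := hpos
  have hz_pos : 0 < energy μ a k p z :=
    pos_of_mul_pos_left (hw.trans_le (hhom w)) (Real.rpow_nonneg (norm_nonneg _) p)
  have hnorm : 1 ≤ ‖z.2‖ ^ p := (le_mul_iff_one_le_right hz_pos).1 (hhom z)
  exact ⟨z, le_antisymm (mem_closedBall_zero_iff.1 hz.2)
    (not_lt.1 fun h => hnorm.not_gt (Real.rpow_lt_one (norm_nonneg _) h hp)), hz_pos, hhom⟩

lemma hasDerivAt_energy (hk : IsBddKernel μ k M) (ha : Integrable a μ) (hp : 1 < p)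
    (z h : ℝ × H) :
    HasDerivAt (fun t : ℝ => energy μ a k p (z + t • h))
      (∫ x, a x * (p * (kernelFun k z x)⁺ ^ (p - 1) * kernelFun k h x) ∂μ) 0 := by
  have hp' : 0 ≤ p - 1 := by linarith
  set B := (1 + M) * (‖z‖ + ‖h‖)
  have hmeas (q : ℝ) (hq : 0 ≤ q) (t : ℝ) :
      AEStronglyMeasurable (fun x => (kernelFun k (z + t • h) x)⁺ ^ q) μ :=
    hk.aestronglyMeasurable_posPart_rpow hq _
  have key := hasDerivAt_integral_of_dominated_loc_of_deriv_le (μ := μ) (x₀ := (0 : ℝ))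
    (F := fun t x => a x * (kernelFun k (z + t • h) x)⁺ ^ p)
    (F' := fun t x => a x * (p * (kernelFun k (z + t • h) x)⁺ ^ (p - 1) * kernelFun k h x))
    (bound := fun x => ‖a x‖ * (p * B ^ (p - 1) * B))
    (Metric.ball_mem_nhds (0 : ℝ) one_pos)
    (Eventually.of_forall fun t =>
      (hk.integrable_mul_posPart_rpow ha (by linarith) _).aestronglyMeasurable)
    (hk.integrable_mul_posPart_rpow ha (by linarith) _)
    (ha.aestronglyMeasurable.mul ((aestronglyMeasurable_const.mul (hmeas _ hp' 0)).mul
      (hk.aestronglyMeasurable_kernelFun h)))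
    (ae_of_all _ fun x t ht => ?_) (ha.norm.mul_const _) (ae_of_all _ fun x t _ => ?_)
  · have hderiv := key.2
    simp only [zero_smul, add_zero] at hderiv
    exact hderiv
  · have ht1 : ‖t‖ ≤ 1 := (mem_ball_zero_iff.1 ht).le
    have hzt : ‖z + t • h‖ ≤ ‖z‖ + ‖h‖ := (norm_add_le _ _).trans
      (add_le_add_right ((norm_smul t h).trans_le (mul_le_of_le_one_left (norm_nonneg h) ht1)) _)
    have hpow := norm_posPart_rpow_le hp' (hk.abs_kernelFun_le hzt x)
    have hh : ‖kernelFun k h x‖ ≤ B :=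
      hk.abs_kernelFun_le (le_add_of_nonneg_left (norm_nonneg z)) x
    rw [norm_mul, norm_mul, norm_mul, Real.norm_of_nonneg (zero_le_one.trans hp.le)]
    gcongr
    · exact mul_nonneg (by linarith) ((norm_nonneg _).trans hpow)
  · have hline : HasDerivAt (fun t : ℝ => kernelFun k (z + t • h) x) (kernelFun k h x) t := by
      simp only [kernelFun_add, kernelFun_smul]
      exact (hasDerivAt_mul_const (kernelFun k h x)).const_add (kernelFun k z x)
    exact ((hasDerivAt_posPart_rpow hp _).comp t hline).const_mul (a x)

lemma energy_mul_inner_eq (hk : IsBddKernel μ k M) (ha : Integrable a μ) (hp : 1 < p)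
    {z : ℝ × H} (hz : ‖z.2‖ = 1)
    (hmax : ∀ w, energy μ a k p w ≤ energy μ a k p z * ‖w.2‖ ^ p) (h : ℝ × H) :
    energy μ a k p z * ⟪z.2, h.2⟫ =
      ∫ x, a x * (kernelFun k z x)⁺ ^ (p - 1) * kernelFun k h x ∂μ := by
  set Φ : ℝ → ℝ := fun t =>
    energy μ a k p z * ‖z.2 + t • h.2‖ ^ p - energy μ a k p (z + t • h) with hΦ
  have hmin : IsLocalMin Φ 0 := Eventually.of_forall fun t => by
    simpa [hΦ, hz] using hmax (z + t • h)
  have hline : HasDerivAt (fun t : ℝ => z.2 + t • h.2) h.2 0 := by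
    simpa using ((hasDerivAt_id (0 : ℝ)).smul_const h.2).const_add z.2
  have hnorm : HasDerivAt (fun t : ℝ => ‖z.2 + t • h.2‖ ^ p) (p * ⟪z.2, h.2⟫) 0 := by
    have hcomp := (hasFDerivAt_norm_rpow (z.2 + (0 : ℝ) • h.2) hp).comp_hasDerivAt 0 hline
    simpa [hz, Function.comp_def] using hcomp
  have hcrit := hmin.hasDerivAt_eq_zero
    ((hnorm.const_mul (energy μ a k p z)).sub (hk.hasDerivAt_energy ha hp z h))
  have hfactor : ∫ x, a x * (p * (kernelFun k z x)⁺ ^ (p - 1) * kernelFun k h x) ∂μ =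
      p * ∫ x, a x * (kernelFun k z x)⁺ ^ (p - 1) * kernelFun k h x ∂μ := by
    rw [← integral_const_mul]
    exact integral_congr_ae (ae_of_all _ fun x => by ring)
  have hp0 : p ≠ 0 := by linarith
  rw [hfactor] at hcrit
  exact mul_left_cancel₀ hp0 (by linarith)

lemma exists_forall_inner_eq_integral [CompleteSpace H] [TopologicalSpace.SeparableSpace H]
    {γ : ℝ} (hk : IsBddKernel μ k M) (ha : Integrable a μ) (hγ : 0 < γ) (hneg : ∫ x, a x ∂μ < 0)
    (hpos : ∃ z, 0 < energy μ a k (γ + 1) z) :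
    ∃ l > 0, ∃ z, (¬ ∀ᵐ x ∂μ, kernelFun k z x ≤ 0) ∧
      ∀ h : ℝ × H, ⟪z.2, h.2⟫ = ∫ x, l * a x * (kernelFun k z x)⁺ ^ γ * kernelFun k h x ∂μ := by
  obtain ⟨z, hz, hE, hmax⟩ := hk.exists_energy_maximizer ha (by linarith) hneg hpos
  refine ⟨(energy μ a k (γ + 1) z)⁻¹, inv_pos.2 hE, z,
    fun hle => hE.ne' (energy_eq_zero_of_nonpos (by linarith) hle), fun h => ?_⟩
  have hEL := hk.energy_mul_inner_eq ha (by linarith) hz hmax h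
  simp only [add_sub_cancel_right] at hEL
  simp only [mul_assoc, integral_const_mul]
  rw [eq_inv_mul_iff_mul_eq₀ hE.ne', hEL]
  simp only [mul_assoc]

end IsBddKernel

end Energy

section Interval

variable {T : ℝ}

lemma continuousOn_primitive_Icc {b : ℝ → ℝ} (hb : IntervalIntegrable b volume 0 T) :
    ContinuousOn (fun x => ∫ t in (0 : ℝ)..x, b t) (Icc 0 T) :=
  (intervalIntegral.continuousOn_primitive_interval' hb left_mem_uIcc).mono Icc_subset_uIcc

lemma intervalIntegrable_of_mem_Icc {b : ℝ → ℝ} (hb : IntervalIntegrable b volume 0 T) {x y : ℝ}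
    (hx : x ∈ Icc 0 T) (hy : y ∈ Icc 0 T) : IntervalIntegrable b volume x y :=
  hb.mono_set (uIcc_subset_uIcc (Icc_subset_uIcc hx) (Icc_subset_uIcc hy))

lemma integral_mul_primitive {s t : ℝ} {b h : ℝ → ℝ} (hb : IntervalIntegrable b volume s t)
    (hh : IntervalIntegrable h volume s t) :
    ∫ x in s..t, b x * ∫ y in s..x, h y =
      (∫ x in s..t, b x) * (∫ x in s..t, h x) - ∫ x in s..t, (∫ y in s..x, b y) * h x := by
  have hderiv {g : ℝ → ℝ} (hg : IntervalIntegrable g volume s t) :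
      ∀ᵐ x, x ∈ uIoc s t → deriv (fun x => ∫ y in s..x, g y) x = g x := by
    filter_upwards [hg.ae_hasDerivAt_integral] with x hx hxm
    exact (hx (uIoc_subset_uIcc hxm) s left_mem_uIcc).deriv
  have hparts := AbsolutelyContinuousOnInterval.integral_mul_deriv_eq_deriv_mul
    (hb.absolutelyContinuousOnInterval_intervalIntegral left_mem_uIcc)
    (hh.absolutelyContinuousOnInterval_intervalIntegral left_mem_uIcc)
  have hleft := intervalIntegral.integral_congr_ae (f := fun x =>
      (∫ y in s..x, b y) * deriv (fun x => ∫ y in s..x, h y) x)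
    ((hderiv hh).mono fun x hx hxm => congrArg ((∫ y in s..x, b y) * ·) (hx hxm))
  have hright := intervalIntegral.integral_congr_ae (f := fun x =>
      deriv (fun x => ∫ y in s..x, b y) x * ∫ y in s..x, h y)
    ((hderiv hb).mono fun x hx hxm => congrArg (· * ∫ y in s..x, h y) (hx hxm))
  rw [hleft, hright, intervalIntegral.integral_same, zero_mul, sub_zero] at hparts
  linarith

lemma ae_nonpos_of_forall_intervalIntegral_nonpos {a : ℝ → ℝ}
    (ha : IntervalIntegrable a volume 0 T)
    (h : ∀ x y, 0 ≤ x → x ≤ y → y ≤ T → ∫ t in x..y, a t ≤ 0) :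
    ∀ᵐ x ∂volume.restrict (Icc 0 T), a x ≤ 0 := by
  have hanti : AntitoneOn (fun x => ∫ t in (0 : ℝ)..x, a t) (Icc 0 T) := by
    intro x hx y hy hxy
    have h0 : (0 : ℝ) ∈ Icc 0 T := left_mem_Icc.2 (hx.1.trans hx.2)
    have hsub := intervalIntegral.integral_interval_sub_left
      (intervalIntegrable_of_mem_Icc ha h0 hy) (intervalIntegrable_of_mem_Icc ha h0 hx)
    linarith [h x y hx.1 hxy hy.2]
  rw [← restrict_Ioo_eq_restrict_Icc, ae_restrict_iff' measurableSet_Ioo]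
  filter_upwards [ha.ae_hasDerivAt_integral] with x hx hxm
  have hderiv := hx (Icc_subset_uIcc (Ioo_subset_Icc_self hxm)) 0 left_mem_uIcc
  rw [← hderiv.deriv, ← derivWithin_of_mem_nhds (Icc_mem_nhds hxm.1 hxm.2)]
  exact hanti.derivWithin_nonpos

open scoped ContDiff in
lemma exists_contDiff_tendsto_indicator {E : Type*} [NormedAddCommGroup E] [NormedSpace ℝ E]
    [FiniteDimensional ℝ E] {s : Set E} (hs : IsOpen s) :
    ∃ φ : ℕ → E → ℝ, (∀ n, ContDiff ℝ ∞ (φ n)) ∧ (∀ n x, φ n x ∈ Icc 0 1) ∧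
      (∀ n, ∀ x ∉ s, φ n x = 0) ∧
      ∀ x, Tendsto (fun n => φ n x) atTop (nhds (s.indicator 1 x)) := by
  obtain ⟨f, hsupp, hf, hf01⟩ := hs.exists_contDiff_support_eq (n := ⊤)
  have h01 (x : E) : f x ∈ Icc 0 1 := hf01 (mem_range_self x)
  have hzero : ∀ x ∉ s, f x = 0 := fun x hx => by
    rwa [← hsupp, Function.notMem_support] at hx
  refine ⟨fun n x => 1 - (1 - f x) ^ n, fun n => contDiff_const.sub ((contDiff_const.sub hf).pow n),
    fun n x => ⟨?_, ?_⟩, fun n x hx => by simp [hzero x hx], fun x => ?_⟩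
  · exact sub_nonneg.2 (pow_le_one₀ (sub_nonneg.2 (h01 x).2) (sub_le_self 1 (h01 x).1))
  · exact sub_le_self 1 (pow_nonneg (sub_nonneg.2 (h01 x).2) n)
  · by_cases hx : x ∈ s
    · have hpos : 0 < f x := (h01 x).1.lt_of_ne' (by rwa [← hsupp] at hx)
      simpa [hx] using (tendsto_pow_atTop_nhds_zero_of_lt_one (sub_nonneg.2 (h01 x).2)
        (sub_lt_self 1 hpos)).const_sub 1
    · simp [hx, hzero x hx]

lemma exists_contDiff_integral_mul_posPart_rpow_pos {a : ℝ → ℝ} {p : ℝ}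
    (ha : IntervalIntegrable a volume 0 T) (hp : 0 < p)
    (hpos : ¬ ∀ᵐ x ∂volume.restrict (Icc 0 T), a x ≤ 0) :
    ∃ φ : ℝ → ℝ, ContDiff ℝ 1 φ ∧ φ 0 = 0 ∧ φ T = 0 ∧
      0 < ∫ x in Ioc 0 T, a x * (φ x)⁺ ^ p := by
  obtain ⟨σ, τ, hσ, hστ, hτ, hint⟩ :
      ∃ σ τ, 0 ≤ σ ∧ σ ≤ τ ∧ τ ≤ T ∧ 0 < ∫ t in σ..τ, a t := by
    contrapose! hpos
    exact ae_nonpos_of_forall_intervalIntegral_nonpos ha hpos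
  have haT : IntegrableOn a (Ioc 0 T) := ha.1
  obtain ⟨φ, hφ, h01, hout, hlim⟩ :=
    exists_contDiff_tendsto_indicator (isOpen_Ioo (a := σ) (b := τ))
  have hind (x : ℝ) :
      a x * ((Ioo σ τ).indicator (1 : ℝ → ℝ) x)⁺ ^ p = (Ioo σ τ).indicator a x := by
    by_cases hx : x ∈ Ioo σ τ <;> simp [hx, hp.ne']
  have hconv : Tendsto (fun n => ∫ x in Ioc 0 T, a x * (φ n x)⁺ ^ p) atTop
      (nhds (∫ x in Ioc 0 T, (Ioo σ τ).indicator a x)) := by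
    simp only [← hind]
    refine tendsto_integral_of_dominated_convergence (fun x => ‖a x‖) (fun n =>
      haT.aestronglyMeasurable.mul
        ((continuous_posPart_rpow hp.le).comp (hφ n).continuous).aestronglyMeasurable) haT.norm
      (fun n => ae_of_all _ fun x => ?_)
      (ae_of_all _ fun x => (((continuous_posPart_rpow hp.le).tendsto _).comp (hlim x)).const_mul _)
    have hle := norm_posPart_rpow_le hp.le ((abs_of_nonneg (h01 n x).1).trans_le (h01 n x).2)
    rw [Real.one_rpow] at hle
    rw [norm_mul]
    exact mul_le_of_le_one_right (norm_nonneg _) hle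
  have hsub : Ioo σ τ ⊆ Ioc 0 T := Ioo_subset_Ioc_self.trans (Ioc_subset_Ioc hσ hτ)
  rw [setIntegral_indicator measurableSet_Ioo, inter_eq_right.2 hsub,
    ← integral_Ioc_eq_integral_Ioo, ← intervalIntegral.integral_of_le hστ] at hconv
  obtain ⟨n, hn⟩ := (hconv.eventually_const_lt hint).exists
  exact ⟨φ n, (hφ n).of_le (by simp), hout n 0 fun h => h.1.not_ge hσ,
    hout n T fun h => h.2.not_ge hτ, hn⟩

end Interval

section Solutions

variable {T : ℝ} {f u u' : ℝ → ℝ}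

lemma isSolOn_of_eq_integral {c κ : ℝ} (hf : IntervalIntegrable f volume 0 T)
    (hu : ∀ x ∈ Icc 0 T, u x = c + ∫ t in (0 : ℝ)..x, (κ - ∫ s in (0 : ℝ)..t, f s)) :
    IsSolOn T f u fun x => κ - ∫ t in (0 : ℝ)..x, f t := by
  have hcont : ContinuousOn (fun x => κ - ∫ t in (0 : ℝ)..x, f t) (Icc 0 T) :=
    continuousOn_const.sub (continuousOn_primitive_Icc hf)
  refine ⟨fun x hx => ?_, hcont, fun x _ => by simp⟩
  have : Fact (x ∈ Icc 0 T) := ⟨hx⟩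
  refine HasDerivWithinAt.congr (.const_add c ?_) hu (hu x hx)
  exact intervalIntegral.integral_hasDerivWithinAt_right
    ((hcont.mono (Icc_subset_Icc_right hx.2)).intervalIntegrable_of_Icc hx.1)
    (hcont.stronglyMeasurableAtFilter_nhdsWithin measurableSet_Icc x) (hcont x hx)

namespace IsSolOn

lemma continuousOn (h : IsSolOn T f u u') : ContinuousOn u (Icc 0 T) :=
  fun x hx => (h.1 x hx).continuousWithinAt

lemma congr {g : ℝ → ℝ} (h : IsSolOn T f u u') (hfg : EqOn f g (Icc 0 T)) : IsSolOn T g u u' := by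
  refine ⟨h.1, h.2.1, fun x hx => ?_⟩
  rw [h.2.2 x hx, intervalIntegral.integral_congr fun t ht => hfg ?_]
  rw [uIcc_of_le hx.1] at ht
  exact Icc_subset_Icc_right hx.2 ht

lemma const_mul (h : IsSolOn T f u u') (r : ℝ) :
    IsSolOn T (fun t => r * f t) (fun x => r * u x) fun x => r * u' x := by
  refine ⟨fun x hx => (h.1 x hx).const_mul r, h.2.1.const_mul r, fun x hx => ?_⟩
  simp only [h.2.2 x hx, intervalIntegral.integral_const_mul, mul_sub]

lemma sub_const (h : IsSolOn T f u u') (m : ℝ) : IsSolOn T f (fun x => u x - m) u' :=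
  ⟨fun x hx => (h.1 x hx).sub_const m, h.2⟩

lemma deriv_sub (h : IsSolOn T f u u') (hf : IntervalIntegrable f volume 0 T) {x y : ℝ}
    (hx : x ∈ Icc 0 T) (hy : y ∈ Icc 0 T) : u' y - u' x = -∫ t in x..y, f t := by
  have h0 : (0 : ℝ) ∈ Icc 0 T := left_mem_Icc.2 (hx.1.trans hx.2)
  rw [h.2.2 x hx, h.2.2 y hy, ← intervalIntegral.integral_interval_sub_left
    (intervalIntegrable_of_mem_Icc hf h0 hy) (intervalIntegrable_of_mem_Icc hf h0 hx)]
  ring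

lemma norm_deriv_le {κ : ℝ → ℝ} {W x y : ℝ} (h : IsSolOn T f u u')
    (hf : IntervalIntegrable f volume 0 T) (hκ : IntervalIntegrable κ volume 0 T)
    (hfκ : ∀ t ∈ Icc 0 T, ‖f t‖ ≤ ‖κ t‖ * ‖u t‖) (hx : x ∈ Icc 0 T) (hy : y ∈ Icc 0 T)
    (hux : u' x = 0) (hW : ∀ t ∈ uIcc x y, ‖u t‖ ≤ W) :
    ‖u' y‖ ≤ (∫ t in (0 : ℝ)..T, ‖κ t‖) * W := by
  have hT : 0 ≤ T := hx.1.trans hx.2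
  have hW0 : 0 ≤ W := (norm_nonneg _).trans (hW x left_mem_uIcc)
  have hsub : uIoc x y ⊆ Ioc 0 T := by
    rw [← uIoc_of_le hT]
    exact uIoc_subset_uIoc_of_uIcc_subset_uIcc
      (uIcc_subset_uIcc (Icc_subset_uIcc hx) (Icc_subset_uIcc hy))
  have hκT : IntegrableOn (fun t => ‖κ t‖) (Ioc 0 T) := hκ.norm.1
  have hpt : ∀ t ∈ uIoc x y, ‖f t‖ ≤ ‖κ t‖ * W := fun t ht =>
    (hfκ t (Ioc_subset_Icc_self (hsub ht))).trans
      (mul_le_mul_of_nonneg_left (hW t (uIoc_subset_uIcc ht)) (norm_nonneg _))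
  calc ‖u' y‖ = ‖∫ t in x..y, f t‖ := by
        rw [← norm_neg (∫ t in x..y, f t), ← h.deriv_sub hf hx hy, hux, sub_zero]
    _ ≤ ∫ t in uIoc x y, ‖f t‖ := intervalIntegral.norm_integral_le_integral_norm_uIoc
    _ ≤ ∫ t in uIoc x y, ‖κ t‖ * W :=
        setIntegral_mono_on (hf.1.mono_set hsub).norm ((hκT.mono_set hsub).mul_const W)
          measurableSet_uIoc hpt
    _ = (∫ t in uIoc x y, ‖κ t‖) * W := integral_mul_const _ _
    _ ≤ (∫ t in (0 : ℝ)..T, ‖κ t‖) * W := by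
        rw [intervalIntegral.integral_of_le hT]
        exact mul_le_mul_of_nonneg_right (setIntegral_mono_set hκT
          (ae_of_all _ fun _ => norm_nonneg _) hsub.eventuallyLE) hW0

lemma eq_zero_of_integral_mul_lt_one {κ : ℝ → ℝ} {x y : ℝ} (h : IsSolOn T f u u')
    (hf : IntervalIntegrable f volume 0 T) (hκ : IntervalIntegrable κ volume 0 T)
    (hfκ : ∀ t ∈ Icc 0 T, ‖f t‖ ≤ ‖κ t‖ * ‖u t‖) (hx : x ∈ Icc 0 T) (hy : y ∈ Icc 0 T)
    (hlt : (∫ t in (0 : ℝ)..T, ‖κ t‖) * |y - x| < 1) (hux : u x = 0 ∧ u' x = 0) :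
    u y = 0 ∧ u' y = 0 := by
  have hsub : uIcc x y ⊆ Icc 0 T := uIcc_subset_Icc hx hy
  obtain ⟨q, hq, hmax⟩ := isCompact_uIcc.exists_isMaxOn nonempty_uIcc
    (h.continuousOn.norm.mono hsub)
  have hle : ∀ t ∈ uIcc x y, ‖u t‖ ≤ ‖u q‖ := fun t ht => hmax ht
  have hderiv : ∀ t ∈ uIcc x y, ‖u' t‖ ≤ (∫ t in (0 : ℝ)..T, ‖κ t‖) * ‖u q‖ := fun t ht =>
    h.norm_deriv_le hf hκ hfκ hx (hsub ht) hux.2 fun s hs =>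
      hle s (uIcc_subset_uIcc_left ht hs)
  have hmv : ‖u q‖ ≤ (∫ t in (0 : ℝ)..T, ‖κ t‖) * |y - x| * ‖u q‖ :=
    calc ‖u q‖ = ‖u q - u x‖ := by rw [hux.1, sub_zero]
      _ ≤ (∫ t in (0 : ℝ)..T, ‖κ t‖) * ‖u q‖ * ‖q - x‖ :=
          (convex_uIcc x y).norm_image_sub_le_of_norm_hasDerivWithin_le
            (fun t ht => (h.1 t (hsub ht)).mono hsub) hderiv left_mem_uIcc hq
      _ ≤ (∫ t in (0 : ℝ)..T, ‖κ t‖) * ‖u q‖ * |y - x| :=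
          mul_le_mul_of_nonneg_left (abs_sub_left_of_mem_uIcc hq)
            ((norm_nonneg _).trans (hderiv x left_mem_uIcc))
      _ = (∫ t in (0 : ℝ)..T, ‖κ t‖) * |y - x| * ‖u q‖ := by ring
  have huq : ‖u q‖ = 0 := by
    by_contra hne
    exact hmv.not_gt (mul_lt_of_lt_one_left ((norm_nonneg _).lt_of_ne' hne) hlt)
  refine ⟨norm_le_zero_iff.1 (huq ▸ hle y right_mem_uIcc), norm_le_zero_iff.1 ?_⟩
  simpa only [huq, mul_zero] using hderiv y right_mem_uIcc

lemma eqOn_zero {κ : ℝ → ℝ} {x : ℝ} (h : IsSolOn T f u u')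
    (hf : IntervalIntegrable f volume 0 T) (hκ : IntervalIntegrable κ volume 0 T)
    (hfκ : ∀ t ∈ Icc 0 T, ‖f t‖ ≤ ‖κ t‖ * ‖u t‖) (hx : x ∈ Icc 0 T) (hux : u x = 0)
    (hux' : u' x = 0) : EqOn u 0 (Icc 0 T) := by
  have hlocal : ∀ x ∈ Icc 0 T, ∀ᶠ y in nhdsWithin x (Icc 0 T),
      (u x = 0 ∧ u' x = 0 → u y = 0 ∧ u' y = 0) ∧ (u y = 0 ∧ u' y = 0 → u x = 0 ∧ u' x = 0) := by
    intro x hx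
    have hsmall : ∀ᶠ y in nhds x, (∫ t in (0 : ℝ)..T, ‖κ t‖) * |y - x| < 1 := by
      have hcont : Continuous fun y => (∫ t in (0 : ℝ)..T, ‖κ t‖) * |y - x| := by fun_prop
      exact (hcont.tendsto x).eventually_lt_const (by simp)
    filter_upwards [self_mem_nhdsWithin, nhdsWithin_le_nhds hsmall] with y hy hlt
    exact ⟨h.eq_zero_of_integral_mul_lt_one hf hκ hfκ hx hy hlt,
      h.eq_zero_of_integral_mul_lt_one hf hκ hfκ hy hx (abs_sub_comm y x ▸ hlt)⟩
  intro y hy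
  exact (isPreconnected_Icc.induction₂' (fun x y => u x = 0 ∧ u' x = 0 → u y = 0 ∧ u' y = 0)
    hlocal (fun _ _ _ _ _ _ hxy hyz => hyz ∘ hxy) hx hy ⟨hux, hux'⟩).1

lemma deriv_mul_sub_nonneg_of_isMinOn {x y : ℝ} (h : IsSolOn T f u u') (hx : x ∈ Icc 0 T)
    (hmin : IsMinOn u (Icc 0 T) x) (hy : y ∈ Icc 0 T) : 0 ≤ u' x * (y - x) := by
  have hmem := sub_mem_posTangentConeAt_of_segment_subset ((convex_Icc 0 T).segment_subset hx hy)
  simpa [mul_comm] using hmin.localize.hasFDerivWithinAt_nonneg (h.1 x hx).hasFDerivWithinAt hmem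

lemma deriv_eq_zero_of_isMinOn {x : ℝ} (h : IsSolOn T f u u') (hT : 0 < T) (hper : u' 0 = u' T)
    (hbc : u' 0 = 0 ∨ u 0 = u T) (hx : x ∈ Icc 0 T) (hmin : IsMinOn u (Icc 0 T) x) :
    u' x = 0 := by
  have h0 : (0 : ℝ) ∈ Icc 0 T := left_mem_Icc.2 hT.le
  have hTT : T ∈ Icc 0 T := right_mem_Icc.2 hT.le
  -- In the periodic case, a minimum at one endpoint is also a minimum at the other one.
  have hend (hmin0 : IsMinOn u (Icc 0 T) 0) (hminT : IsMinOn u (Icc 0 T) T) : u' 0 = 0 := by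
    have hle := h.deriv_mul_sub_nonneg_of_isMinOn h0 hmin0 hTT
    have hge := h.deriv_mul_sub_nonneg_of_isMinOn hTT hminT h0
    rw [← hper] at hge
    nlinarith
  rcases hx.1.eq_or_lt with rfl | hx0
  · refine hbc.elim id fun heq => hend hmin ?_
    rwa [isMinOn_iff, ← heq, ← isMinOn_iff]
  rcases hx.2.eq_or_lt with rfl | hxT
  · rw [← hper]
    refine hbc.elim id fun heq => hend ?_ hmin
    rwa [isMinOn_iff, heq, ← isMinOn_iff]
  have hle := h.deriv_mul_sub_nonneg_of_isMinOn hx hmin h0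
  have hge := h.deriv_mul_sub_nonneg_of_isMinOn hx hmin hTT
  nlinarith

-- If the minimum `m` is `≤ 0` then `u₊^γ ≤ C (u - m)`, so by uniqueness `u` is the constant `m`.
lemma pos_of_posPart {b : ℝ → ℝ} {γ : ℝ} (h : IsSolOn T (fun t => b t * (u t)⁺ ^ γ) u u')
    (hT : 0 < T) (hγ : 1 ≤ γ) (hb : IntervalIntegrable b volume 0 T) (hper : u' 0 = u' T)
    (hbc : u' 0 = 0 ∨ u 0 = u T) (hne : ∃ x ∈ Icc 0 T, 0 < u x) : ∀ x ∈ Icc 0 T, 0 < u x := by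
  have hcont := h.continuousOn
  obtain ⟨z, hz, hmin⟩ := isCompact_Icc.exists_isMinOn (nonempty_Icc.2 hT.le) hcont
  have hmin' : ∀ x ∈ Icc 0 T, u z ≤ u x := fun x hx => hmin hx
  refine fun x hx => lt_of_lt_of_le ?_ (hmin' x hx)
  by_contra! hm
  obtain ⟨B, hB⟩ := isCompact_Icc.exists_bound_of_continuousOn hcont
  have hB0 : 0 ≤ B := (norm_nonneg _).trans (hB z hz)
  have hint : IntervalIntegrable (fun t => b t * (u t)⁺ ^ γ) volume 0 T :=
    hb.mul_continuousOn (uIcc_of_le hT.le ▸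
      (continuous_posPart_rpow (zero_le_one.trans hγ)).comp_continuousOn hcont)
  have hbound : ∀ t ∈ Icc 0 T,
      ‖b t * (u t)⁺ ^ γ‖ ≤ ‖b t * B ^ (γ - 1)‖ * ‖u t - u z‖ := by
    intro t ht
    rw [norm_mul, norm_mul, mul_assoc, Real.norm_of_nonneg (Real.rpow_nonneg hB0 _),
      Real.norm_of_nonneg (Real.rpow_nonneg (posPart_nonneg _) _),
      Real.norm_of_nonneg (sub_nonneg.2 (hmin' t ht))]
    exact mul_le_mul_of_nonneg_left (posPart_rpow_le_mul_sub hγ hm (hmin' t ht) (hB t ht))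
      (norm_nonneg _)
  have hconst := (h.sub_const (u z)).eqOn_zero hint (hb.mul_const _) hbound hz (sub_self _)
    (h.deriv_eq_zero_of_isMinOn hT hper hbc hz hmin)
  obtain ⟨y, hy, hypos⟩ := hne
  exact hm.not_gt (sub_eq_zero.1 (hconst hy) ▸ hypos)

end IsSolOn

end Solutions

section Sobolev

open scoped RealInnerProductSpace

variable {T : ℝ}

/-- The Hilbert space `L²(0, T)`, in which the derivatives of the competitors live. -/
abbrev L2Ioc (T : ℝ) : Type := Lp ℝ 2 (volume.restrict (Ioc 0 T))

/-- The indicator of `(0, x]` in `L²(0, T)`: it represents `f ↦ ∫₀ˣ f`, so that a function in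
`H¹(0, T)` with derivative `f` takes the value `u 0 + ⟪evalKernel T x, f⟫` at `x`. -/
noncomputable def evalKernel (T x : ℝ) : L2Ioc T :=
  indicatorConstLp 2 (measurableSet_Ioc (a := 0) (b := x)) (measure_ne_top _ _) 1

/-- The projection of `evalKernel T x` onto a closed subspace `V`. The choices of `V` used are
`⊤` for the Neumann problem, and the functions of mean zero for the periodic problem. -/
noncomputable def evalKernelOn (V : Submodule ℝ (L2Ioc T)) [V.HasOrthogonalProjection] (x : ℝ) :
    V :=
  V.orthogonalProjectionOnto (evalKernel T x)

lemma inner_evalKernel {x : ℝ} (hx : x ∈ Icc 0 T) (f : L2Ioc T) :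
    ⟪evalKernel T x, f⟫ = ∫ t in (0 : ℝ)..x, f t := by
  rw [evalKernel, L2.inner_indicatorConstLp_one, intervalIntegral.integral_of_le hx.1,
    Measure.restrict_restrict measurableSet_Ioc, inter_eq_left.2 (Ioc_subset_Ioc_right hx.2)]

lemma norm_evalKernel_le (hT : 0 ≤ T) (x : ℝ) : ‖evalKernel T x‖ ≤ √T := by
  have hvol : (volume.restrict (Ioc 0 T)).real (Ioc 0 x) ≤ T :=
    (measureReal_mono (subset_univ _)).trans_eq (by simp [hT])
  rw [evalKernel, norm_indicatorConstLp (by simp) (by simp), norm_one, one_mul, Real.sqrt_eq_rpow,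
    ENNReal.toReal_ofNat]
  exact Real.rpow_le_rpow measureReal_nonneg hvol (by norm_num)

lemma intervalIntegrable_coeFn (hT : 0 ≤ T) (f : L2Ioc T) : IntervalIntegrable f volume 0 T := by
  rw [intervalIntegrable_iff_integrableOn_Ioc_of_le hT]
  exact (Lp.memLp f).integrable one_le_two

lemma memLp_of_continuousOn_Icc {g : ℝ → ℝ} (hg : ContinuousOn g (Icc 0 T)) :
    MemLp g 2 (volume.restrict (Ioc 0 T)) := by
  obtain ⟨C, hC⟩ := isCompact_Icc.exists_bound_of_continuousOn hg
  refine MemLp.of_bound ((hg.mono Ioc_subset_Icc_self).aestronglyMeasurable measurableSet_Ioc) C ?_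
  filter_upwards [ae_restrict_mem measurableSet_Ioc] with x hx
  exact hC x (Ioc_subset_Icc_self hx)

lemma intervalIntegral_congr_of_ae_Ioc {f g : ℝ → ℝ} {x : ℝ} (hx : x ∈ Icc 0 T)
    (h : f =ᵐ[volume.restrict (Ioc 0 T)] g) :
    ∫ t in (0 : ℝ)..x, f t = ∫ t in (0 : ℝ)..x, g t := by
  rw [intervalIntegral.integral_of_le hx.1, intervalIntegral.integral_of_le hx.1]
  exact integral_congr_ae (ae_restrict_of_ae_restrict_of_subset (Ioc_subset_Ioc_right hx.2) h)

lemma inner_toLp {g : ℝ → ℝ} (hT : 0 ≤ T) (hg : MemLp g 2 (volume.restrict (Ioc 0 T)))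
    (f : L2Ioc T) : ⟪hg.toLp, f⟫ = ∫ x in (0 : ℝ)..T, g x * f x := by
  rw [L2.inner_def, intervalIntegral.integral_of_le hT]
  refine integral_congr_ae ?_
  filter_upwards [hg.coeFn_toLp] with x hx
  rw [hx]
  exact mul_comm _ _

lemma evalKernel_self_ne_zero (hT : 0 < T) : evalKernel T T ≠ 0 := by
  intro hzero
  have hone := memLp_of_continuousOn_Icc (T := T) (continuousOn_const (c := (1 : ℝ)))
  have hinner := inner_evalKernel (right_mem_Icc.2 hT.le) hone.toLp
  rw [hzero, inner_zero_left, intervalIntegral_congr_of_ae_Ioc (right_mem_Icc.2 hT.le)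
    hone.coeFn_toLp, integral_one, sub_zero] at hinner
  exact hT.ne hinner

lemma exists_ae_eq_const_sub_primitive {V : Submodule ℝ (L2Ioc T)} {b : ℝ → ℝ}
    {f : L2Ioc T} (hT : 0 ≤ T)
    (hb : IntervalIntegrable b volume 0 T) (hb0 : ∫ x in (0 : ℝ)..T, b x = 0)
    (hV : (ℝ ∙ evalKernel T T)ᗮ ≤ V)
    (hf : ∀ h ∈ V, ⟪f, h⟫ = ∫ x in (0 : ℝ)..T, b x * ∫ t in (0 : ℝ)..x, h t) :
    ∃ κ : ℝ, κ • evalKernel T T ∈ Vᗮ ∧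
      f =ᵐ[volume.restrict (Ioc 0 T)] fun x => κ - ∫ t in (0 : ℝ)..x, b t := by
  have hB := memLp_of_continuousOn_Icc (continuousOn_primitive_Icc hb)
  have horth : f + hB.toLp ∈ Vᗮ := by
    refine (Submodule.mem_orthogonal' _ _).2 fun h hh => ?_
    rw [inner_add_left, hf h hh, inner_toLp hT hB,
      integral_mul_primitive hb (intervalIntegrable_coeFn hT h), hb0]
    ring
  have hspan : f + hB.toLp ∈ ℝ ∙ evalKernel T T := by
    have := Submodule.orthogonal_le hV horth
    rwa [Submodule.orthogonal_orthogonal] at this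
  obtain ⟨κ, hκ⟩ := Submodule.mem_span_singleton.1 hspan
  refine ⟨κ, hκ ▸ horth, ?_⟩
  have hf_eq : f = κ • evalKernel T T - hB.toLp := eq_sub_of_add_eq hκ.symm
  rw [hf_eq]
  filter_upwards [Lp.coeFn_sub (κ • evalKernel T T) hB.toLp, Lp.coeFn_smul κ (evalKernel T T),
    hB.coeFn_toLp, indicatorConstLp_coeFn_mem (p := 2) (hs := measurableSet_Ioc (a := 0) (b := T))
      (hμs := measure_ne_top (volume.restrict (Ioc 0 T)) _) (c := (1 : ℝ)),
    ae_restrict_mem measurableSet_Ioc] with x hsub hsmul hBx hone hx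
  rw [hsub, Pi.sub_apply, hsmul, hBx, Pi.smul_apply, evalKernel, hone hx, smul_eq_mul, mul_one]

section Subspace

variable {V : Submodule ℝ (L2Ioc T)} [V.HasOrthogonalProjection]

lemma inner_evalKernelOn {x : ℝ} (hx : x ∈ Icc 0 T) (f : V) :
    ⟪evalKernelOn V x, f⟫ = ∫ t in (0 : ℝ)..x, (f : L2Ioc T) t := by
  rw [evalKernelOn, V.inner_orthogonalProjectionOnto_eq_of_mem_right, inner_evalKernel hx]

lemma isBddKernel_evalKernelOn (hT : 0 ≤ T) :
    IsBddKernel (volume.restrict (Ioc 0 T)) (evalKernelOn V) √T where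
  aestronglyMeasurable_inner f :=
    (((continuousOn_primitive_Icc (intervalIntegrable_coeFn hT f)).mono
      Ioc_subset_Icc_self).congr fun _ hx =>
        inner_evalKernelOn (Ioc_subset_Icc_self hx) f).aestronglyMeasurable measurableSet_Ioc
  norm_le x := (V.norm_orthogonalProjectionOnto_apply_le _).trans (norm_evalKernel_le hT x)

lemma exists_energy_evalKernelOn_pos {a : ℝ → ℝ} {p : ℝ} (hT : 0 ≤ T)
    (ha : IntervalIntegrable a volume 0 T) (hp : 0 < p)
    (hpos : ¬ ∀ᵐ x ∂volume.restrict (Icc 0 T), a x ≤ 0) (hV : (ℝ ∙ evalKernel T T)ᗮ ≤ V) :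
    ∃ z, 0 < energy (volume.restrict (Ioc 0 T)) a (evalKernelOn V) p z := by
  obtain ⟨φ, hφ, hφ0, hφT, hint⟩ := exists_contDiff_integral_mul_posPart_rpow_pos ha hp hpos
  have hderiv : Continuous (deriv φ) := hφ.continuous_deriv le_rfl
  have hmem := memLp_of_continuousOn_Icc (T := T) hderiv.continuousOn
  have hprim : ∀ x ∈ Icc 0 T, ∫ t in (0 : ℝ)..x, (hmem.toLp : L2Ioc T) t = φ x := by
    intro x hx
    rw [intervalIntegral_congr_of_ae_Ioc hx hmem.coeFn_toLp, intervalIntegral.integral_deriv_eq_sub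
      (fun t _ => (hφ.differentiable one_ne_zero).differentiableAt)
      (hderiv.intervalIntegrable 0 x), hφ0, sub_zero]
  have hfV : hmem.toLp ∈ V := hV <| Submodule.mem_orthogonal_singleton_iff_inner_right.2 <| by
    rw [inner_evalKernel (right_mem_Icc.2 hT), hprim T (right_mem_Icc.2 hT), hφT]
  refine ⟨(0, ⟨hmem.toLp, hfV⟩), hint.trans_eq (setIntegral_congr_fun measurableSet_Ioc ?_)⟩
  intro x hx
  have hx' := Ioc_subset_Icc_self hx
  simp only [kernelFun, zero_add, inner_evalKernelOn hx', hprim x hx']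

end Subspace

end Sobolev

section Existence

open scoped RealInnerProductSpace

variable {T γ : ℝ} {a : ℝ → ℝ}

lemma isSolOn_of_forall_inner_eq {b : ℝ → ℝ} {V : Submodule ℝ (L2Ioc T)}
    [V.HasOrthogonalProjection] {z : ℝ × V} (hT : 0 ≤ T) (hb : IntervalIntegrable b volume 0 T)
    (hV : (ℝ ∙ evalKernel T T)ᗮ ≤ V)
    (hz : ∀ h : ℝ × V,
      ⟪z.2, h.2⟫ = ∫ x in Ioc 0 T, b x * kernelFun (evalKernelOn V) h x) :
    ∃ u', IsSolOn T b (kernelFun (evalKernelOn V) z) u' ∧ u' 0 = u' T ∧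
      u' 0 • evalKernel T T ∈ Vᗮ := by
  have hb0 : ∫ x in (0 : ℝ)..T, b x = 0 := by
    have hconst := hz (1, 0)
    simp only [kernelFun, inner_zero_right, add_zero, mul_one] at hconst
    rw [intervalIntegral.integral_of_le hT, ← hconst]
  have hf : ∀ h ∈ V, ⟪(z.2 : L2Ioc T), h⟫ = ∫ x in (0 : ℝ)..T, b x * ∫ t in (0 : ℝ)..x, h t := by
    intro h hh
    rw [intervalIntegral.integral_of_le hT]
    refine (hz (0, ⟨h, hh⟩)).trans (setIntegral_congr_fun measurableSet_Ioc fun x hx => ?_)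
    simp only [kernelFun, zero_add, inner_evalKernelOn (Ioc_subset_Icc_self hx)]
  obtain ⟨κ, hκ, hfκ⟩ := exists_ae_eq_const_sub_primitive hT hb hb0 hV hf
  refine ⟨_, isSolOn_of_eq_integral (c := z.1) (κ := κ) hb fun x hx => ?_, ?_, ?_⟩
  · rw [kernelFun, inner_evalKernelOn hx, intervalIntegral_congr_of_ae_Ioc hx hfκ]
  · rw [hb0, intervalIntegral.integral_same]
  · rwa [intervalIntegral.integral_same, sub_zero]

lemma exists_isSolOn_posPart (hT : 0 ≤ T) (hγ : 0 < γ) (ha : IntervalIntegrable a volume 0 T)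
    (hneg : ∫ x in (0 : ℝ)..T, a x < 0) (hpos : ¬ ∀ᵐ x ∂volume.restrict (Icc 0 T), a x ≤ 0)
    {V : Submodule ℝ (L2Ioc T)} [CompleteSpace V] (hV : (ℝ ∙ evalKernel T T)ᗮ ≤ V) :
    ∃ l > 0, ∃ (z : ℝ × V) (u' : ℝ → ℝ),
      IsSolOn T (fun t => l * a t * (kernelFun (evalKernelOn V) z t)⁺ ^ γ)
        (kernelFun (evalKernelOn V) z) u' ∧
      (∃ x ∈ Icc 0 T, 0 < kernelFun (evalKernelOn V) z x) ∧
      u' 0 = u' T ∧ u' 0 • evalKernel T T ∈ Vᗮ := by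
  have : Fact ((2 : ENNReal) ≠ ⊤) := ⟨ENNReal.ofNat_ne_top⟩
  have hk : IsBddKernel (volume.restrict (Ioc 0 T)) (evalKernelOn V) √T :=
    isBddKernel_evalKernelOn hT
  rw [intervalIntegral.integral_of_le hT] at hneg
  obtain ⟨l, hl, z, hne, hz⟩ := hk.exists_forall_inner_eq_integral ha.1 hγ hneg
    (exists_energy_evalKernelOn_pos hT ha (add_pos hγ one_pos) hpos hV)
  have hint : IntegrableOn (fun t => l * a t * (kernelFun (evalKernelOn V) z t)⁺ ^ γ) (Ioc 0 T) :=
    hk.integrable_mul_posPart_rpow (ha.1.const_mul l) hγ.le z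
  obtain ⟨u', hsol, hper, horth⟩ := isSolOn_of_forall_inner_eq hT
    ((intervalIntegrable_iff_integrableOn_Ioc_of_le hT).2 hint) hV hz
  refine ⟨l, hl, z, u', hsol, ?_, hper, horth⟩
  contrapose! hne
  filter_upwards [ae_restrict_mem measurableSet_Ioc] with x hx
  exact hne x (Ioc_subset_Icc_self hx)

lemma IsSolOn.exists_pos_rescaled {l : ℝ} {u u' : ℝ → ℝ} (hT : 0 < T) (hγ : 1 < γ)
    (ha : IntervalIntegrable a volume 0 T) (hl : 0 < l)
    (h : IsSolOn T (fun t => l * a t * (u t)⁺ ^ γ) u u') (hper : u' 0 = u' T)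
    (hbc : u' 0 = 0 ∨ u 0 = u T) (hne : ∃ x ∈ Icc 0 T, 0 < u x) :
    ∃ r : ℝ, IsSolOn T (fun t => a t * (r * u t) ^ γ) (fun x => r * u x) (fun x => r * u' x) ∧
      ∀ x ∈ Icc 0 T, 0 < r * u x := by
  have hu := h.pos_of_posPart hT hγ.le (ha.const_mul l) hper hbc hne
  have hr : 0 < l ^ (γ - 1)⁻¹ := Real.rpow_pos_of_pos hl _
  have hrγ : (l ^ (γ - 1)⁻¹) ^ γ = l ^ (γ - 1)⁻¹ * l := by
    have hγ' : γ - 1 ≠ 0 := by linarith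
    nth_rewrite 3 [← Real.rpow_one l]
    rw [← Real.rpow_mul hl.le, ← Real.rpow_add hl]
    congr 1
    field_simp
    ring
  refine ⟨l ^ (γ - 1)⁻¹, (h.const_mul _).congr fun t ht => ?_, fun x hx => mul_pos hr (hu x hx)⟩
  simp only [posPart_eq_self.2 (hu t ht).le, Real.mul_rpow hr.le (hu t ht).le, hrγ]
  ring

lemma posSolNeumann_of_integral_neg (hT : 0 < T) (hγ : 1 < γ)
    (ha : IntervalIntegrable a volume 0 T) (hneg : ∫ x in (0 : ℝ)..T, a x < 0)
    (hpos : ¬ ∀ᵐ x ∂volume.restrict (Icc 0 T), a x ≤ 0) :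
    PosSolNeumann T a fun s => s ^ γ := by
  have : CompleteSpace (⊤ : Submodule ℝ (L2Ioc T)) := isClosed_univ.completeSpace_coe
  obtain ⟨l, hl, z, u', hsol, hne, hper, horth⟩ := exists_isSolOn_posPart hT.le
    (zero_lt_one.trans hγ) ha hneg hpos (V := (⊤ : Submodule ℝ (L2Ioc T))) le_top
  have h0 : u' 0 = 0 := by
    rw [Submodule.top_orthogonal_eq_bot, Submodule.mem_bot] at horth
    exact (smul_eq_zero.1 horth).resolve_right (evalKernel_self_ne_zero hT)
  obtain ⟨r, hr, hrpos⟩ := hsol.exists_pos_rescaled hT hγ ha hl hper (Or.inl h0) hne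
  exact ⟨_, _, hr, hrpos, by simp only [h0, mul_zero], by simp only [← hper, h0, mul_zero]⟩

lemma posSolPeriodic_of_integral_neg (hT : 0 < T) (hγ : 1 < γ)
    (ha : IntervalIntegrable a volume 0 T) (hneg : ∫ x in (0 : ℝ)..T, a x < 0)
    (hpos : ¬ ∀ᵐ x ∂volume.restrict (Icc 0 T), a x ≤ 0) :
    PosSolPeriodic T a fun s => s ^ γ := by
  obtain ⟨l, hl, z, u', hsol, hne, hper, -⟩ :=
    exists_isSolOn_posPart hT.le (zero_lt_one.trans hγ) ha hneg hpos
      (V := (ℝ ∙ evalKernel T T)ᗮ) le_rfl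
  have hends : kernelFun (evalKernelOn (ℝ ∙ evalKernel T T)ᗮ) z 0 =
      kernelFun (evalKernelOn (ℝ ∙ evalKernel T T)ᗮ) z T := by
    rw [kernelFun, kernelFun, inner_evalKernelOn (left_mem_Icc.2 hT.le),
      inner_evalKernelOn (right_mem_Icc.2 hT.le), ← inner_evalKernel (right_mem_Icc.2 hT.le),
      intervalIntegral.integral_same, Submodule.mem_orthogonal_singleton_iff_inner_right.1 z.2.2]
  obtain ⟨r, hr, hrpos⟩ := hsol.exists_pos_rescaled hT hγ ha hl hper (Or.inr hends) hne
  exact ⟨_, _, hr, hrpos, congrArg (r * ·) hends, congrArg (r * ·) hper⟩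

end Existence

section Necessity

variable {T : ℝ} {f u u' : ℝ → ℝ}

namespace IsSolOn

lemma integral_mul_eq {w w' : ℝ → ℝ} (h : IsSolOn T f u u') (hT : 0 ≤ T)
    (hf : IntervalIntegrable f volume 0 T)
    (hw : ∀ x ∈ Icc 0 T, HasDerivWithinAt w (w' x) (Icc 0 T) x) (hw' : ContinuousOn w' (Icc 0 T)) :
    ∫ x in (0 : ℝ)..T, f x * w x =
      w 0 * u' 0 - w T * u' T + ∫ x in (0 : ℝ)..T, u' x * w' x := by
  have hw_int : IntervalIntegrable w' volume 0 T := hw'.intervalIntegrable_of_Icc hT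
  have hprim : ∀ x ∈ Icc 0 T, ∫ t in (0 : ℝ)..x, w' t = w x - w 0 := fun x hx =>
    intervalIntegral.integral_eq_sub_of_hasDerivAt_of_le hx.1
      (fun t ht => ((hw t ⟨ht.1, ht.2.trans hx.2⟩).continuousWithinAt.mono
        (Icc_subset_Icc_right hx.2)))
      (fun t ht => (hw t ⟨ht.1.le, ht.2.le.trans hx.2⟩).hasDerivAt
        (Icc_mem_nhds ht.1 (ht.2.trans_le hx.2)))
      (intervalIntegrable_of_mem_Icc hw_int (left_mem_Icc.2 hT) hx)
  have huw_int : IntervalIntegrable (fun x => u' x * w' x) volume 0 T :=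
    (h.2.1.mul hw').intervalIntegrable_of_Icc hT
  have hleft : ∫ x in (0 : ℝ)..T, f x * w x =
      w 0 * (∫ x in (0 : ℝ)..T, f x) + ∫ x in (0 : ℝ)..T, f x * ∫ t in (0 : ℝ)..x, w' t := by
    rw [← intervalIntegral.integral_const_mul, ← intervalIntegral.integral_add (hf.const_mul _)
      (hf.mul_continuousOn (uIcc_of_le hT ▸ continuousOn_primitive_Icc hw_int))]
    refine intervalIntegral.integral_congr fun x hx => ?_
    rw [uIcc_of_le hT] at hx
    simp only [hprim x hx]
    ring
  have hright : ∫ x in (0 : ℝ)..T, (∫ t in (0 : ℝ)..x, f t) * w' x =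
      u' 0 * (∫ x in (0 : ℝ)..T, w' x) - ∫ x in (0 : ℝ)..T, u' x * w' x := by
    rw [← intervalIntegral.integral_const_mul, ← intervalIntegral.integral_sub
      (hw_int.const_mul _) huw_int]
    refine intervalIntegral.integral_congr fun x hx => ?_
    rw [uIcc_of_le hT] at hx
    simp only [h.2.2 x hx]
    ring
  have hTT := right_mem_Icc.2 hT
  rw [hleft, integral_mul_primitive hf hw_int, hright, hprim T hTT, h.2.2 T hTT]
  ring

lemma ae_eq_zero_of_deriv_eq_zero (h : IsSolOn T f u u') (hf : IntervalIntegrable f volume 0 T)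
    (hu' : ∀ x ∈ Icc 0 T, u' x = 0) : ∀ᵐ x ∂volume.restrict (Icc 0 T), f x = 0 := by
  have hzero : ∀ x y, 0 ≤ x → x ≤ y → y ≤ T → ∫ t in x..y, f t = 0 := by
    intro x y hx hxy hy
    have hmem : x ∈ Icc 0 T := ⟨hx, hxy.trans hy⟩
    have hmem' : y ∈ Icc 0 T := ⟨hx.trans hxy, hy⟩
    have := h.deriv_sub hf hmem hmem'
    rw [hu' x hmem, hu' y hmem'] at this
    linarith
  filter_upwards [ae_nonpos_of_forall_intervalIntegral_nonpos hf fun x y hx hxy hy =>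
      (hzero x y hx hxy hy).le,
    ae_nonpos_of_forall_intervalIntegral_nonpos hf.neg fun x y hx hxy hy => by
      simp [hzero x y hx hxy hy]] with x hle hge
  exact le_antisymm hle (neg_nonpos.1 hge)

variable {a : ℝ → ℝ} {γ : ℝ}

lemma integral_eq_neg_mul (h : IsSolOn T (fun t => a t * u t ^ γ) u u') (hT : 0 ≤ T)
    (hf : IntervalIntegrable (fun t => a t * u t ^ γ) volume 0 T) (hu : ∀ x ∈ Icc 0 T, 0 < u x)
    (hper : u' 0 = u' T) (hbc : u' 0 = 0 ∨ u 0 = u T) :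
    ∫ x in (0 : ℝ)..T, a x = -(γ * ∫ x in (0 : ℝ)..T, u' x ^ 2 * u x ^ (-γ - 1)) := by
  have hw : ∀ x ∈ Icc 0 T, HasDerivWithinAt (fun x => u x ^ (-γ)) (u' x * -γ * u x ^ (-γ - 1))
      (Icc 0 T) x := fun x hx => (h.1 x hx).rpow_const (Or.inl (hu x hx).ne')
  have hw' : ContinuousOn (fun x => u' x * -γ * u x ^ (-γ - 1)) (Icc 0 T) :=
    (h.2.1.mul continuousOn_const).mul
      (h.continuousOn.rpow_const fun x hx => Or.inl (hu x hx).ne')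
  have hboundary : u 0 ^ (-γ) * u' 0 - u T ^ (-γ) * u' T = 0 := by
    rcases hbc with h0 | h0 <;> simp [← hper, h0]
  have hweak := h.integral_mul_eq hT hf hw hw'
  rw [hboundary, zero_add] at hweak
  have hleft : ∫ x in (0 : ℝ)..T, a x * u x ^ γ * u x ^ (-γ) = ∫ x in (0 : ℝ)..T, a x := by
    refine intervalIntegral.integral_congr fun x hx => ?_
    rw [uIcc_of_le hT] at hx
    simp only [mul_assoc, ← Real.rpow_add (hu x hx), add_neg_cancel, Real.rpow_zero, mul_one]
  rw [← hleft, hweak, ← neg_mul, ← intervalIntegral.integral_const_mul]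
  exact intervalIntegral.integral_congr fun x _ => by ring

lemma integral_neg (h : IsSolOn T (fun t => a t * u t ^ γ) u u') (hT : 0 < T) (hγ : 0 < γ)
    (ha : IntervalIntegrable a volume 0 T)
    (hne : ¬ ∀ᵐ x ∂volume.restrict (Icc 0 T), a x = 0) (hu : ∀ x ∈ Icc 0 T, 0 < u x)
    (hper : u' 0 = u' T) (hbc : u' 0 = 0 ∨ u 0 = u T) : ∫ x in (0 : ℝ)..T, a x < 0 := by
  have hpow (q : ℝ) : ContinuousOn (fun x => u x ^ q) (Icc 0 T) :=
    h.continuousOn.rpow_const fun x hx => Or.inl (hu x hx).ne'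
  have hf : IntervalIntegrable (fun t => a t * u t ^ γ) volume 0 T :=
    ha.mul_continuousOn (uIcc_of_le hT.le ▸ hpow γ)
  obtain ⟨c, hc, hc'⟩ : ∃ x ∈ Icc 0 T, u' x ≠ 0 := by
    contrapose! hne
    filter_upwards [h.ae_eq_zero_of_deriv_eq_zero hf hne, ae_restrict_mem measurableSet_Icc]
      with x hx hxm
    exact (mul_eq_zero.1 hx).resolve_right (Real.rpow_pos_of_pos (hu x hxm) γ).ne'
  rw [h.integral_eq_neg_mul hT.le hf hu hper hbc, neg_lt_zero]
  refine mul_pos hγ (intervalIntegral.integral_pos hT ((h.2.1.pow 2).mul (hpow _))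
    (fun x hx => ?_) ⟨c, hc, ?_⟩)
  · exact mul_nonneg (sq_nonneg _) (Real.rpow_nonneg (hu x (Ioc_subset_Icc_self hx)).le _)
  · exact mul_pos (sq_pos_of_ne_zero hc') (Real.rpow_pos_of_pos (hu c hc) _)

end IsSolOn

end Necessity

lemma CondA1.not_ae_nonpos {T : ℝ} {a : ℝ → ℝ} (h : CondA1 T a) :
    ¬ ∀ᵐ x ∂volume.restrict (Icc 0 T), a x ≤ 0 := by
  obtain ⟨m, σ, τ, hm, hbd, -, hnonneg, hne, -⟩ := h
  intro hle
  refine hne ⟨0, hm⟩ ?_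
  filter_upwards [hnonneg ⟨0, hm⟩, ae_restrict_of_ae_restrict_of_subset
    (Icc_subset_Icc (hbd ⟨0, hm⟩).1 (hbd ⟨0, hm⟩).2.2) hle] with x h0 h1
  exact le_antisymm h1 h0

theorem statement_5_general {T γ : ℝ} (hT : 0 < T) (hγ : 1 < γ) {a : ℝ → ℝ}
    (ha : IntervalIntegrable a volume 0 T)
    (hpos : ¬ ∀ᵐ x ∂volume.restrict (Icc 0 T), a x ≤ 0) :
    (PosSolNeumann T a (fun s => s ^ γ) ↔ ∫ x in (0 : ℝ)..T, a x < 0) ∧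
    (PosSolPeriodic T a (fun s => s ^ γ) ↔ ∫ x in (0 : ℝ)..T, a x < 0) := by
  have hne : ¬ ∀ᵐ x ∂volume.restrict (Icc 0 T), a x = 0 := fun h =>
    hpos (h.mono fun _ hx => hx.le)
  refine ⟨⟨?_, fun h => posSolNeumann_of_integral_neg hT hγ ha h hpos⟩,
    ⟨?_, fun h => posSolPeriodic_of_integral_neg hT hγ ha h hpos⟩⟩
  · rintro ⟨u, u', hsol, hu, h0, h1⟩
    exact hsol.integral_neg hT (zero_lt_one.trans hγ) ha hne hu (h0.trans h1.symm) (Or.inl h0)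
  · rintro ⟨u, u', hsol, hu, hends, hper⟩
    exact hsol.integral_neg hT (zero_lt_one.trans hγ) ha hne hu hper (Or.inr hends)

/-- Corollary: for `γ > 1` and a weight satisfying (a1), the superlinear problem
`u'' + a(x) u^γ = 0` has a positive Neumann (resp. periodic) solution if and only
if `∫₀ᵀ a < 0`. -/
theorem statement_5
    (T : ℝ) (hT : 0 < T) (γ : ℝ) (hγ : 1 < γ)
    (a : ℝ → ℝ) (ha : IntervalIntegrable a volume 0 T)
    (ha1 : CondA1 T a) :
    (PosSolNeumann T a (fun s => s ^ γ) ↔ (∫ x in (0:ℝ)..T, a x) < 0) ∧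
    (PosSolPeriodic T a (fun s => s ^ γ) ↔ (∫ x in (0:ℝ)..T, a x) < 0) := by
  exact statement_5_general hT hγ ha ha1.not_ae_nonpos
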